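/- Let G be a finite group of order n > 1, let q be the smallest prime divisor of n and p the largest prime divisor of n. If G is not solvable, or if some Sylow p-subgroup of G contains no cyclic subgroup of index p, then 2(q-1)·ψ(G) < ψ(C_n), and in particular q·ψ(G) < ψ(C_n). -/

import Mathlib

/-- `psi G` is the sum of the orders of all elements of the finite group `G`. -/
noncomputable def psi (G : Type*) [Group G] [Fintype G] : ℕ := ∑ x : G, orderOf x

/-- `psiC n` is the sum of the orders of all elements of the cyclic group `C_n`. -/
noncomputable def psiC (n : ℕ) : ℕ := ∑ k ∈ Finset.range n, addOrderOf (k : ZMod n)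

/-!
Suppose that `ψ(C_n) ≤ 2 (q - 1) ψ(G)`. As `ψ(G)` is at most `n` times the largest element order,
and `ψ(C_n) / n ^ 2 ≥ q / (p + 1)`, some element generates a cyclic subgroup `A` of index less
than `2 p`. The index of `A` is then either `p` or prime to `p`, so every Sylow `p`-subgroup has a
cyclic subgroup of index `p`.

For solvability, if the index is `p` then `A` is an abelian maximal subgroup, and `G` is solvable
by Herstein's theorem. Otherwise `A` contains a Sylow `p`-subgroup `P`. If `P` is not normal,
counting Sylow subgroups shows that `A` is again maximal. If `P` is normal, then `G = P ⋊ K` by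
Schur–Zassenhaus, and `ψ(P ⋊ K) ≤ ψ(P) ψ(K)` transfers the assumed inequality to the smaller
group `K`.
-/

section CyclicPsi

open Finset

theorem psi_eq_psiC_of_isCyclic (G : Type*) [Group G] [Fintype G] [IsCyclic G] :
    psi G = psiC (Fintype.card G) := by
  classical
  obtain ⟨g, hg⟩ := IsCyclic.exists_generator (α := G)
  have hcard : orderOf g = Fintype.card G := by
    rw [orderOf_eq_card_of_forall_mem_zpowers hg, Nat.card_eq_fintype_card]
  have hinj : Set.InjOn (g ^ ·) (range (Fintype.card G)) := by
    rw [coe_range, ← hcard]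
    exact pow_injOn_Iio_orderOf
  rw [psi, psiC, ← IsCyclic.image_range_card hg, Nat.card_eq_fintype_card, sum_image hinj]
  refine sum_congr rfl fun k _ => ?_
  rw [ZMod.addOrderOf_coe k Fintype.card_ne_zero, orderOf_pow, hcard]

theorem psi_eq_sum_divisors (G : Type*) [Group G] [Fintype G] [IsCyclic G] :
    psi G = ∑ d ∈ (Fintype.card G).divisors, d * d.totient := by
  classical
  rw [psi, ← sum_fiberwise_of_maps_to (g := orderOf) (t := (Fintype.card G).divisors)
    fun x _ => by simp [orderOf_dvd_card]]
  refine sum_congr rfl fun d hd => ?_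
  rw [sum_congr rfl fun x hx => (mem_filter.1 hx).2, sum_const,
    IsCyclic.card_orderOf_eq_totient (Nat.dvd_of_mem_divisors hd), smul_eq_mul, mul_comm]

theorem psiC_eq_sum_divisors (n : ℕ) : psiC n = ∑ d ∈ n.divisors, d * d.totient := by
  rcases eq_or_ne n 0 with rfl | hn
  · simp [psiC]
  have : NeZero n := ⟨hn⟩
  have hcard : Fintype.card (Multiplicative (ZMod n)) = n := by
    rw [Fintype.card_multiplicative, ZMod.card]
  rw [← hcard, ← psi_eq_psiC_of_isCyclic, psi_eq_sum_divisors]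

theorem psiC_mul {m n : ℕ} (h : m.Coprime n) : psiC (m * n) = psiC m * psiC n := by
  simp only [psiC_eq_sum_divisors]
  rw [Nat.divisors_mul, mul_def, sum_image h.mul_injOn_divisors, sum_product, sum_mul_sum]
  refine sum_congr rfl fun d hd => sum_congr rfl fun e he => ?_
  rw [Nat.totient_mul (h.of_dvd (Nat.dvd_of_mem_divisors hd) (Nat.dvd_of_mem_divisors he))]
  ring

theorem psiC_prime_pow {p : ℕ} (hp : p.Prime) (a : ℕ) :
    psiC (p ^ a) * (p + 1) = p * (p ^ a) ^ 2 + 1 := by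
  rw [psiC_eq_sum_divisors, Nat.sum_divisors_prime_pow hp]
  obtain ⟨k, rfl⟩ := Nat.exists_eq_add_of_le' hp.one_le
  induction a with
  | zero => simp
  | succ a ih =>
    rw [sum_range_succ, add_mul, ih, Nat.totient_prime_pow_succ hp, Nat.add_sub_cancel]
    ring

/- Telescoping: `ψ(C_m) / m ^ 2` is at least the product of the `r / (r + 1)` over the primes
`r ∣ m`, hence at least the product of the `j / (j + 1)` over all `q ≤ j < k`, which is `q / k`. -/
theorem mul_sq_le_psiC_mul {q k m : ℕ} (hqk : q ≤ k) (hm : m.primeFactors ⊆ Ico q k) :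
    q * m ^ 2 ≤ psiC m * k := by
  induction k, hqk using Nat.le_induction generalizing m with
  | base =>
    rw [Ico_self, subset_empty, Nat.primeFactors_eq_empty] at hm
    rcases hm with rfl | rfl <;> simp [psiC]
  | succ k _ ih =>
    by_cases hk : k ∈ m.primeFactors
    · have hp := Nat.prime_of_mem_primeFactors hk
      have hm0 : m ≠ 0 := (Nat.mem_primeFactors.1 hk).2.2
      obtain ⟨a, b, hkb, rfl⟩ := Nat.exists_eq_pow_mul_and_not_dvd hm0 k hp.ne_one
      have hb : q * b ^ 2 ≤ psiC b * k := ih fun r hr => by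
        have hr' := mem_Ico.1 (hm (Nat.primeFactors_mono (dvd_mul_left b _) hm0 hr))
        have hrk : r ≠ k := fun h => hkb (h ▸ Nat.dvd_of_mem_primeFactors hr)
        exact mem_Ico.2 (by omega)
      have ha : k * (k ^ a) ^ 2 ≤ psiC (k ^ a) * (k + 1) := by
        rw [psiC_prime_pow hp]
        exact Nat.le_succ _
      rw [psiC_mul ((hp.coprime_iff_not_dvd.2 hkb).pow_left a)]
      refine le_of_mul_le_mul_left ?_ hp.pos
      calc k * (q * (k ^ a * b) ^ 2) = k * (k ^ a) ^ 2 * (q * b ^ 2) := by ring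
        _ ≤ psiC (k ^ a) * (k + 1) * (psiC b * k) := Nat.mul_le_mul ha hb
        _ = k * (psiC (k ^ a) * psiC b * (k + 1)) := by ring
    · refine (ih fun r hr => ?_).trans (Nat.mul_le_mul_left _ k.le_succ)
      have hr' := mem_Ico.1 (hm hr)
      have hrk : r ≠ k := ne_of_mem_of_not_mem hr hk
      exact mem_Ico.2 (by omega)

end CyclicPsi

section PsiBounds

open Finset Subgroup

variable {G : Type*} [Group G]

variable (G) in
theorem exists_psi_le_card_mul_orderOf [Fintype G] :
    ∃ x : G, psi G ≤ Nat.card G * orderOf x := by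
  obtain ⟨x, -, hx⟩ := exists_max_image (univ : Finset G) orderOf univ_nonempty
  rw [Nat.card_eq_fintype_card]
  exact ⟨x, sum_le_card_nsmul _ _ _ hx⟩

theorem exists_index_zpowers_lt [Fintype G] {p q : ℕ} (hq : 0 < q) (hqp : q ≤ p)
    (hprimes : (Nat.card G).primeFactors ⊆ Icc q p)
    (hpsi : psiC (Nat.card G) ≤ 2 * (q - 1) * psi G) :
    ∃ x : G, (zpowers x).index < 2 * p := by
  obtain ⟨x, hx⟩ := exists_psi_le_card_mul_orderOf G
  have hindex : orderOf x * (zpowers x).index = Nat.card G := by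
    rw [← Nat.card_zpowers, card_mul_index]
  have hpos : 0 < Nat.card G * orderOf x := Nat.mul_pos Nat.card_pos (orderOf_pos x)
  have hlt : (q - 1) * (p + 1) < q * p := by
    obtain ⟨k, rfl⟩ := Nat.exists_eq_add_of_le' hq
    rw [Nat.add_sub_cancel]
    linarith
  have hle : q * (zpowers x).index ≤ 2 * ((q - 1) * (p + 1)) := by
    refine le_of_mul_le_mul_left ?_ hpos
    calc Nat.card G * orderOf x * (q * (zpowers x).index)
        = q * (Nat.card G * (orderOf x * (zpowers x).index)) := by ring
      _ = q * Nat.card G ^ 2 := by rw [hindex, sq]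
      _ ≤ psiC (Nat.card G) * (p + 1) := mul_sq_le_psiC_mul (by omega) hprimes
      _ ≤ 2 * (q - 1) * psi G * (p + 1) := by gcongr
      _ ≤ 2 * (q - 1) * (Nat.card G * orderOf x) * (p + 1) := by gcongr
      _ = Nat.card G * orderOf x * (2 * ((q - 1) * (p + 1))) := by ring
  refine ⟨x, Nat.lt_of_mul_lt_mul_left (a := q) ?_⟩
  linarith

theorem zpowers_normal_of_mem {N : Subgroup G} [N.Normal] [IsCyclic N] {u : G} (hu : u ∈ N) :
    (zpowers u).Normal := by
  refine ⟨fun v hv g => ?_⟩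
  obtain ⟨s, rfl⟩ := mem_zpowers_iff.1 hv
  obtain ⟨m, hm⟩ := (MulAut.conjNormal g : MulAut N).toMonoidHom.map_cyclic
  have hconj : g * u * g⁻¹ = u ^ m := congrArg Subtype.val (hm ⟨u, hu⟩)
  rw [← conj_zpow, hconj]
  exact zpow_mem (zpow_mem (mem_zpowers u) m) s

theorem orderOf_mul_dvd_of_normal {u : G} [(zpowers u).Normal] (k : G) :
    orderOf (u * k) ∣ orderOf u * orderOf k := by
  have hmem : (u * k) ^ orderOf k ∈ zpowers u := by
    rw [← QuotientGroup.eq_one_iff, QuotientGroup.mk_pow, QuotientGroup.mk_mul,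
      (QuotientGroup.eq_one_iff u).2 (mem_zpowers u), one_mul, ← QuotientGroup.mk_pow,
      pow_orderOf_eq_one, QuotientGroup.mk_one]
  obtain ⟨s, hs⟩ := mem_zpowers_iff.1 hmem
  rw [orderOf_dvd_iff_pow_eq_one, mul_comm, pow_mul, ← hs, zpow_pow_orderOf]

theorem psi_le_psi_mul_psi_of_isComplement' [Fintype G] {N K : Subgroup G} [N.Normal] [IsCyclic N]
    [Fintype N] [Fintype K] (h : N.IsComplement' K) : psi G ≤ psi N * psi K := by
  have hbij : Function.Bijective fun x : N × K => (x.1 : G) * x.2 := h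
  rw [psi, ← hbij.sum_comp, Fintype.sum_prod_type, psi, psi, sum_mul_sum]
  refine sum_le_sum fun u _ => sum_le_sum fun k _ => ?_
  have := zpowers_normal_of_mem u.2
  rw [← orderOf_coe u, ← orderOf_coe k]
  exact Nat.le_of_dvd (Nat.mul_pos (orderOf_pos _) (orderOf_pos _)) (orderOf_mul_dvd_of_normal _)

theorem psiC_card_le_of_isComplement' [Fintype G] {N K : Subgroup G} [N.Normal] [IsCyclic N]
    [Fintype K] (h : N.IsComplement' K) (hcop : (Nat.card N).Coprime (Nat.card K)) {c : ℕ}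
    (hpsi : psiC (Nat.card G) ≤ c * psi G) : psiC (Nat.card K) ≤ c * psi K := by
  have : Fintype N := Fintype.ofFinite N
  have hpos : 0 < psi N := sum_pos (fun u _ => orderOf_pos u) univ_nonempty
  refine le_of_mul_le_mul_left ?_ hpos
  calc psi N * psiC (Nat.card K)
      = psiC (Nat.card G) := by
        rw [← h.card_mul_card, psiC_mul hcop, psi_eq_psiC_of_isCyclic, ← Nat.card_eq_fintype_card]
    _ ≤ c * psi G := hpsi
    _ ≤ c * (psi N * psi K) := Nat.mul_le_mul_left _ (psi_le_psi_mul_psi_of_isComplement' h)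
    _ = psi N * (c * psi K) := mul_left_comm _ _ _

end PsiBounds

section Solvability

open Subgroup
open scoped IsMulCommutative

variable {G : Type*} [Group G]

theorem isSolvable_of_sup_eq_top (N A : Subgroup G) [N.Normal]
    [Group.IsSolvable N] [Group.IsSolvable A] (h : N ⊔ A = ⊤) : Group.IsSolvable G := by
  have hsurj : Function.Surjective ((QuotientGroup.mk' N).comp A.subtype) := by
    rw [← MonoidHom.range_eq_top, MonoidHom.range_comp, range_subtype, eq_top_iff,
      ← map_top_of_surjective _ (QuotientGroup.mk'_surjective N), ← h, Subgroup.map_sup,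
      QuotientGroup.map_mk'_self, bot_sup_eq]
  exact (Group.isSolvable_iff_subgroup_quotient N).2
    ⟨inferInstance, Group.isSolvable_of_surjective hsurj⟩

theorem isSolvable_of_normal_of_isCoatom (N : Subgroup G) [N.Normal] [Group.IsSolvable N]
    (hN : IsCoatom N) : Group.IsSolvable G := by
  obtain ⟨g, -, hg⟩ := SetLike.exists_of_lt hN.lt_top
  exact isSolvable_of_sup_eq_top N (zpowers g) <|
    hN.2 _ <| left_lt_sup.2 fun hle => hg (hle (mem_zpowers g))

theorem isCoatom_of_index_prime {A : Subgroup G} (h : A.index.Prime) : IsCoatom A := by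
  refine ⟨fun hA => h.ne_one (index_eq_one.2 hA), fun M hM => index_eq_one.1 ?_⟩
  have hmul := relIndex_mul_index hM.le
  refine ((Nat.dvd_prime h).1 (Dvd.intro_left _ hmul)).resolve_right fun hMA => hM.not_ge ?_
  rw [hMA] at hmul
  exact relIndex_eq_one.1 (Nat.eq_of_mul_eq_mul_right h.pos (hmul.trans (one_mul _).symm))

theorem isCoatom_map_mk' {N A : Subgroup G} [N.Normal] (hNA : N ≤ A) (hA : IsCoatom A) :
    IsCoatom (A.map (QuotientGroup.mk' N)) := by
  have hsurj := QuotientGroup.mk'_surjective N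
  have hcomap : (A.map (QuotientGroup.mk' N)).comap (QuotientGroup.mk' N) = A := by
    rw [comap_map_eq, QuotientGroup.ker_mk', sup_eq_left.2 hNA]
  refine ⟨fun h => hA.1 ?_, fun M hM => comap_injective hsurj ?_⟩
  · rw [← hcomap, h, comap_top]
  · rw [comap_top]
    exact hA.2 _ (hcomap ▸ (comap_lt_comap_of_surjective hsurj).2 hM)

theorem exists_sylow_le_of_not_dvd_index {p : ℕ} [hp : Fact p.Prime] {A : Subgroup G}
    [A.FiniteIndex] [Finite A] (h : ¬ p ∣ A.index) : ∃ P : Sylow p G, (P : Subgroup G) ≤ A := by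
  obtain ⟨R⟩ : Nonempty (Sylow p A) := inferInstance
  have hR : ¬ p ∣ ((R : Subgroup A).map A.subtype).index := by
    rw [index_map_subtype, hp.out.dvd_mul, not_or]
    exact ⟨R.not_dvd_index, h⟩
  exact ⟨(R.2.map A.subtype).toSylow hR, map_subtype_le _⟩

theorem le_centralizer_of_le {A H : Subgroup G} [IsMulCommutative A] (h : H ≤ A) :
    A ≤ centralizer (H : Set G) :=
  (le_centralizer A).trans (centralizer_le h)

theorem centralizer_eq_of_isCoatom {A H : Subgroup G} [IsMulCommutative A] (hA : IsCoatom A)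
    (hHA : H ≤ A) (hH : ¬ H ≤ center G) : centralizer (H : Set G) = A :=
  (hA.le_iff.1 (le_centralizer_of_le hHA)).resolve_left fun h =>
    hH (centralizer_eq_top_iff_subset.1 h)

theorem normalizer_eq_of_isCoatom {A H : Subgroup G} [IsMulCommutative A] (hA : IsCoatom A)
    (hn : ¬ A.Normal) (hHA : H ≤ A) (hH : ¬ H ≤ center G) : normalizer (H : Set G) = A := by
  have hC := centralizer_eq_of_isCoatom hA hHA hH
  refine (hA.le_iff.1 (hC.ge.trans (centralizer_le_normalizer _))).resolve_left fun h => hn ?_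
  have : H.Normal := normalizer_eq_top_iff.1 h
  exact hC ▸ inferInstance

theorem exists_sylow_normalizer_eq_of_isCoatom [Finite G] {p : ℕ} [hp : Fact p.Prime]
    (hZ : center G = ⊥) {A : Subgroup G} [IsMulCommutative A] (hA : IsCoatom A)
    (hn : ¬ A.Normal) (hpA : p ∣ Nat.card A) :
    ∃ S : Sylow p G, (S : Subgroup G) ≤ A ∧ normalizer (S : Set G) = A := by
  obtain ⟨x, hx⟩ := exists_prime_orderOf_dvd_card' p hpA
  have hxcard : Nat.card (zpowers (x : G)) = p := by rw [Nat.card_zpowers, orderOf_coe, hx]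
  have hxA : zpowers (x : G) ≤ A := zpowers_le.2 x.2
  obtain ⟨S, hxS⟩ : ∃ S : Sylow p G, zpowers (x : G) ≤ S :=
    (IsPGroup.of_card (n := 1) (hxcard.trans (pow_one p).symm)).exists_le_sylow
  have hS : (S : Subgroup G) ≠ ⊥ := S.ne_bot_of_dvd_card (hpA.trans A.card_subgroup_dvd_card)
  have : Nontrivial S := (nontrivial_iff_ne_bot _).2 hS
  let Z : Subgroup G := (center S).map (S : Subgroup G).subtype
  have hSZ : (S : Subgroup G) ≤ centralizer (Z : Set G) := by
    rintro s hs _ ⟨z, hz, rfl⟩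
    exact (congrArg Subtype.val (mem_center_iff.1 hz ⟨s, hs⟩)).symm
  have hZA : Z ≤ A := by
    rw [← centralizer_eq_of_isCoatom hA hxA, ← le_centralizer_iff]
    · exact hxS.trans hSZ
    · rw [hZ, le_bot_iff, ← card_eq_one, hxcard]
      exact hp.out.ne_one
  have hSA : (S : Subgroup G) ≤ A := by
    refine hSZ.trans_eq (centralizer_eq_of_isCoatom hA hZA ?_)
    have := S.2.bot_lt_center.ne'
    rwa [hZ, le_bot_iff, map_eq_bot_iff_of_injective _ (subtype_injective _)]
  exact ⟨S, hSA, normalizer_eq_of_isCoatom hA hn hSA (by rwa [hZ, le_bot_iff])⟩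

theorem not_dvd_card_commutator [Finite G] {p : ℕ} [Fact p.Prime] (S : Sylow p G)
    (hS : normalizer (S : Set G) ≤ centralizer (S : Set G)) :
    ¬ p ∣ Nat.card (commutator G) := by
  have : IsMulCommutative S := le_centralizer_iff_isMulCommutative.1 (le_normalizer.trans hS)
  exact fun h => MonoidHom.not_dvd_card_ker_transferSylow S hS <|
    h.trans (card_dvd_of_le (Abelianization.commutator_subset_ker _))

theorem coprime_card_commutator_of_isCoatom [Finite G] (hZ : center G = ⊥) {A : Subgroup G}
    [IsMulCommutative A] (hA : IsCoatom A) (hn : ¬ A.Normal) :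
    (Nat.card (commutator G)).Coprime (Nat.card A) := by
  refine Nat.Coprime.symm (Nat.coprime_of_dvd fun p hp hpA => ?_)
  have := Fact.mk hp
  obtain ⟨S, hSA, hS⟩ := exists_sylow_normalizer_eq_of_isCoatom hZ hA hn hpA
  exact not_dvd_card_commutator S (hS.trans_le (le_centralizer_of_le hSA))

theorem isComplement'_commutator_of_isCoatom [Finite G] (hZ : center G = ⊥) {A : Subgroup G}
    [IsMulCommutative A] (hA : IsCoatom A) (hn : ¬ A.Normal) :
    (commutator G).IsComplement' A := by
  have hsup : commutator G ⊔ A = ⊤ :=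
    hA.2 _ (right_lt_sup.2 fun h => hn (Normal.of_commutator_le G h))
  refine isComplement'_of_disjoint_and_mul_eq_univ
    (disjoint_of_coprime_natCard (coprime_card_commutator_of_isCoatom hZ hA hn)) ?_
  rw [← normal_mul, hsup, coe_top]

theorem isMulCommutative_of_disjoint_commutator {B : Subgroup G} (h : Disjoint (commutator G) B) :
    IsMulCommutative B := by
  rw [← le_centralizer_iff_isMulCommutative, ← commutator_eq_bot_iff_le_centralizer, ← le_bot_iff]
  exact h (commutator_mono le_top le_top) (commutator_le_self B)

theorem exists_isComplement'_le_of_sup_eq_top {K M : Subgroup G} [Finite G] [K.Normal]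
    (hK : (Nat.card K).Coprime K.index) (hM : M ⊔ K = ⊤) :
    ∃ B ≤ M, K.IsComplement' B := by
  have hindex : (K.subgroupOf M).index = K.index := by
    rw [← relIndex, ← relIndex_sup_right, hM, relIndex_top_right]
  have hcard : Nat.card (K.subgroupOf M) ∣ Nat.card K :=
    card_comap_dvd_of_injective _ _ M.subtype_injective
  obtain ⟨B, hB⟩ := exists_right_complement'_of_coprime (N := K.subgroupOf M)
    (hindex ▸ hK.coprime_dvd_left hcard)
  have hBcard : Nat.card (B.map M.subtype) = K.index := by
    rw [card_map_of_injective M.subtype_injective, ← hindex, hB.symm.index_eq_card]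
  exact ⟨B.map M.subtype, map_subtype_le B, isComplement'_of_coprime
    (by rw [hBcard, K.card_mul_index]) (hBcard ▸ hK)⟩

theorem exists_map_conj_le_of_isCoatom [Finite G] (hZ : center G = ⊥) {A M : Subgroup G}
    [IsMulCommutative A] (hA : IsCoatom A) (hn : ¬ A.Normal) (hM : M ⊔ commutator G = ⊤) :
    ∃ g : G, A.map (MulAut.conj g).toMonoidHom ≤ M := by
  have hcompl := isComplement'_commutator_of_isCoatom hZ hA hn
  have hcop := coprime_card_commutator_of_isCoatom hZ hA hn
  obtain ⟨B, hBM, hB⟩ :=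
    exists_isComplement'_le_of_sup_eq_top (hcompl.symm.index_eq_card.symm ▸ hcop) hM
  have hBA : Nat.card B = Nat.card A :=
    hB.symm.index_eq_card.symm.trans hcompl.symm.index_eq_card
  have : IsMulCommutative B := isMulCommutative_of_disjoint_commutator hB.disjoint
  obtain ⟨p, hp, hpA⟩ : ∃ p : ℕ, p.Prime ∧ p ∣ Nat.card A := by
    refine Nat.exists_prime_and_dvd fun h => hn ?_
    rw [card_eq_one.1 h]
    infer_instance
  have := Fact.mk hp
  obtain ⟨S, -, hS⟩ := exists_sylow_normalizer_eq_of_isCoatom hZ hA hn hpA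
  obtain ⟨T, hTB⟩ : ∃ T : Sylow p G, (T : Subgroup G) ≤ B := by
    refine exists_sylow_le_of_not_dvd_index ?_
    rw [hB.index_eq_card]
    exact fun h => hp.one_lt.ne' (Nat.eq_one_of_dvd_coprimes hcop h hpA)
  obtain ⟨g, rfl⟩ := MulAction.exists_smul_eq G S T
  -- The conjugate of `A` is the normalizer of `T`, so it contains the abelian group `B`.
  refine ⟨g, (eq_of_le_of_card_ge ?_ ?_).symm.trans_le hBM⟩
  · rw [← hS]
    exact ((le_centralizer_of_le hTB).trans (centralizer_le_normalizer _)).trans_eq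
      (map_equiv_normalizer_eq (S : Subgroup G) _).symm
  · rw [card_map_of_injective (MulAut.conj g).injective, hBA]

theorem isSolvable_of_isCoatom_of_center_eq_bot [Finite G] (hZ : center G = ⊥) {A : Subgroup G}
    [IsMulCommutative A] (hA : IsCoatom A) (hn : ¬ A.Normal) : Group.IsSolvable G := by
  have hcop := coprime_card_commutator_of_isCoatom hZ hA hn
  obtain ⟨r, hr, hrK⟩ : ∃ r : ℕ, r.Prime ∧ r ∣ Nat.card (commutator G) := by
    refine Nat.exists_prime_and_dvd fun h => hn (Normal.of_commutator_le G ?_)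
    rw [card_eq_one.1 h]
    exact bot_le
  have := Fact.mk hr
  obtain ⟨R⟩ : Nonempty (Sylow r (commutator G)) := inferInstance
  let Q : Subgroup G := (R : Subgroup (commutator G)).map (commutator G).subtype
  have hrQ : r ∣ Nat.card Q := by
    rw [card_map_of_injective (subtype_injective _)]
    exact R.dvd_card_of_dvd_card hrK
  have : Group.IsNilpotent Q := (R.2.map _).isNilpotent
  -- By Frattini's argument, the normalizer of `Q` supplements the commutator subgroup.
  obtain ⟨g, hg⟩ := exists_map_conj_le_of_isCoatom hZ hA hn R.normalizer_sup_eq_top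
  let B : Subgroup G := A.map (MulAut.conj g).toMonoidHom
  have hB : IsCoatom B := ((MulAut.conj g).mapSubgroup.isCoatom_iff A).2 hA
  have hQB : ¬ Q ≤ B := fun h => hr.one_lt.ne' <| Nat.eq_one_of_dvd_coprimes hcop hrK <|
    (hrQ.trans (card_dvd_of_le h)).trans (card_map_of_injective (MulAut.conj g).injective).dvd
  have hN : normalizer (Q : Set G) = ⊤ := (hB.le_iff.1 hg).resolve_right
    fun h => hQB (le_normalizer.trans_eq h)
  have : Q.Normal := normalizer_eq_top_iff.1 hN
  exact isSolvable_of_sup_eq_top Q B (hB.2 _ (right_lt_sup.2 hQB))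

/-- Herstein's theorem. -/
theorem isSolvable_of_isCoatom {G : Type*} [Group G] [Finite G] {A : Subgroup G}
    [IsMulCommutative A] (hA : IsCoatom A) : Group.IsSolvable G := by
  by_cases hn : A.Normal
  · exact isSolvable_of_normal_of_isCoatom A hA
  by_cases hZ : center G = ⊥
  · exact isSolvable_of_isCoatom_of_center_eq_bot hZ hA hn
  by_cases hZA : center G ≤ A
  · have : Group.IsSolvable (G ⧸ center G) := isSolvable_of_isCoatom (isCoatom_map_mk' hZA hA)
    exact (Group.isSolvable_iff_subgroup_quotient (center G)).2 ⟨inferInstance, this⟩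
  · exact isSolvable_of_sup_eq_top (center G) A (hA.2 _ (right_lt_sup.2 hZA))
termination_by Nat.card G
decreasing_by
  rw [← (center G).card_mul_index, index]
  exact lt_mul_of_one_lt_left Nat.card_pos ((one_lt_card_iff_ne_bot _).2 hZ)

theorem lt_relIndex_normalizer_sylow {p : ℕ} [hp : Fact p.Prime] (P : Sylow p G)
    {M : Subgroup G} [Finite M] (hPM : (P : Subgroup G) ≤ M)
    (hM : ¬ M ≤ normalizer (P : Set G)) : p < (normalizer (P : Set G)).relIndex M := by
  have hcard : Nat.card (Sylow p M) = (normalizer (P : Set G)).relIndex M := by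
    rw [(P.subtype hPM).card_eq_index_normalizer, relIndex]
    exact congrArg index (subgroupOf_normalizer_eq hPM).symm
  have hmod := hcard ▸ card_sylow_modEq_one p M
  by_contra! hle
  rcases hle.lt_or_eq with h | h
  · exact hM (relIndex_eq_one.1 (hmod.eq_of_lt_of_lt h hp.out.one_lt))
  · exact not_dvd_card_sylow p M (hcard.trans h).symm.dvd

/- For `A < M < G`, one of the indices `|G : M|` and `|M : A|` exceeds `p` by counting Sylow
`p`-subgroups of `G` or of `M`, and the other is at least `2`. -/
theorem isCoatom_of_index_lt_of_le_normalizer_sylow [Finite G] {p : ℕ} [Fact p.Prime]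
    {P : Sylow p G} (hn : ¬ (P : Subgroup G).Normal) {A : Subgroup G} (hPA : (P : Subgroup G) ≤ A)
    (hAN : A ≤ normalizer (P : Set G)) (hA : A.index < 2 * (p + 1)) : IsCoatom A := by
  have hN : ¬ ⊤ ≤ normalizer (P : Set G) := fun h => hn (normalizer_eq_top_iff.1 (top_le_iff.1 h))
  refine ⟨fun h => hN (h ▸ hAN), fun M hAM => index_eq_one.1 ?_⟩
  have hmul : A.relIndex M * M.index = A.index := relIndex_mul_index hAM.le
  have hM0 : M.index ≠ 0 := index_ne_zero_of_finite
  by_cases hMN : M ≤ normalizer (P : Set G)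
  · have hMp : p < M.index := by
      refine (lt_relIndex_normalizer_sylow P le_top hN).trans_le ?_
      rw [relIndex_top_right]
      exact index_antitone hMN
    have : A.relIndex M ≠ 0 := index_ne_zero_of_finite
    have : A.relIndex M ≠ 1 := fun h => hAM.not_ge (relIndex_eq_one.1 h)
    nlinarith [show 2 ≤ A.relIndex M by omega]
  · have hAMp : p < A.relIndex M :=
      (lt_relIndex_normalizer_sylow P (hPA.trans hAM.le) hMN).trans_le
        (relIndex_le_of_le_left hAN index_ne_zero_of_finite)
    nlinarith [Nat.pos_of_ne_zero hM0]

theorem isSolvable_or_exists_normal_sylow_le [Finite G] {p : ℕ} [hp : Fact p.Prime]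
    (A : Subgroup G) [IsMulCommutative A] (hA : A.index < 2 * p) :
    Group.IsSolvable G ∨ ∃ P : Sylow p G, (P : Subgroup G) ≤ A ∧ (P : Subgroup G).Normal := by
  by_cases hpA : p ∣ A.index
  · have hindex : A.index = p := Nat.eq_of_dvd_of_lt_two_mul index_ne_zero_of_finite hpA hA
    exact .inl (isSolvable_of_isCoatom (isCoatom_of_index_prime (hindex ▸ hp.out)))
  obtain ⟨P, hPA⟩ := exists_sylow_le_of_not_dvd_index hpA
  by_cases hn : (P : Subgroup G).Normal
  · exact .inr ⟨P, hPA, hn⟩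
  have hAN : A ≤ normalizer (P : Set G) :=
    (le_centralizer_of_le hPA).trans (centralizer_le_normalizer _)
  exact .inl (isSolvable_of_isCoatom
    (isCoatom_of_index_lt_of_le_normalizer_sylow hn hPA hAN (by omega)))

theorem pow_dvd_card_of_index_lt {p b : ℕ} (hp : p.Prime) (A : Subgroup G) [A.FiniteIndex]
    (hA : A.index < 2 * p) (h : p ^ (b + 1) ∣ Nat.card G) : p ^ b ∣ Nat.card A := by
  have hA0 : A.index ≠ 0 := FiniteIndex.index_ne_zero
  rw [← A.index_mul_card] at h
  by_cases hpA : p ∣ A.index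
  · rw [Nat.eq_of_dvd_of_lt_two_mul hA0 hpA hA, pow_succ'] at h
    exact Nat.dvd_of_mul_dvd_mul_left hp.pos h
  · exact (pow_dvd_pow p b.le_succ).trans (hp.prime.pow_dvd_of_dvd_mul_left _ hpA h)

theorem exists_isCyclic_le_sylow_of_pow_dvd_card [Finite G] {p b : ℕ} [Fact p.Prime]
    (A : Subgroup G) [IsCyclic A] (h : p ^ b ∣ Nat.card A) (P : Sylow p G) :
    ∃ H : Subgroup G, H ≤ (P : Subgroup G) ∧ IsCyclic H ∧ Nat.card H = p ^ b := by
  obtain ⟨H, hH⟩ := Sylow.exists_subgroup_card_pow_prime p h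
  let K : Subgroup G := H.map A.subtype
  have hK : Nat.card K = p ^ b := (card_map_of_injective A.subtype_injective).trans hH
  obtain ⟨T, hKT⟩ := (IsPGroup.of_card hK).exists_le_sylow
  obtain ⟨g, rfl⟩ := MulAction.exists_smul_eq G T P
  have : IsCyclic K := isCyclic_of_surjective _ (A.subtype.subgroupMap_surjective H)
  exact ⟨K.map (MulAut.conj g).toMonoidHom, map_mono hKT,
    isCyclic_of_surjective _ (MonoidHom.subgroupMap_surjective _ K),
    (card_map_of_injective (MulAut.conj g).injective).trans hK⟩

theorem exists_isCyclic_index_eq_of_index_lt [Finite G] {p : ℕ} [hp : Fact p.Prime]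
    (hpG : p ∣ Nat.card G) (A : Subgroup G) [IsCyclic A] (hA : A.index < 2 * p) (P : Sylow p G) :
    ∃ H : Subgroup G, H ≤ (P : Subgroup G) ∧ IsCyclic H ∧
      (H.subgroupOf (P : Subgroup G)).index = p := by
  obtain ⟨b, hb⟩ := Nat.exists_eq_succ_of_ne_zero
    (hp.out.factorization_pos_of_dvd Nat.card_pos.ne' hpG).ne'
  have hP : Nat.card P = p ^ (b + 1) := P.card_eq_multiplicity.trans (congrArg _ hb)
  obtain ⟨H, hHP, hHcyc, hH⟩ := exists_isCyclic_le_sylow_of_pow_dvd_card A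
    (pow_dvd_card_of_index_lt hp.out A hA (hP ▸ (P : Subgroup G).card_subgroup_dvd_card)) P
  refine ⟨H, hHP, hHcyc, Nat.eq_of_mul_eq_mul_left (pow_pos hp.out.pos b) ?_⟩
  have hmul := relIndex_mul_relIndex ⊥ H P bot_le hHP
  rwa [relIndex_bot_left, relIndex_bot_left, hH, hP, pow_succ] at hmul

end Solvability

section Criterion

open Subgroup

theorem isSolvable_of_psiC_le {G : Type*} [Group G] [Fintype G] {q : ℕ} (hq : 0 < q)
    (hprimes : ∀ r ∈ (Nat.card G).primeFactors, q ≤ r)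
    (hpsi : psiC (Nat.card G) ≤ 2 * (q - 1) * psi G) : Group.IsSolvable G := by
  classical
  rcases (Nat.card G).primeFactors.eq_empty_or_nonempty with hG | hG
  · have : Subsingleton G := by
      have := Nat.primeFactors_eq_empty.1 hG
      exact (Nat.card_eq_one_iff_unique.1 (this.resolve_left Nat.card_pos.ne')).1
    infer_instance
  obtain ⟨p, hp, hmax⟩ := Finset.exists_max_image _ id hG
  have := Fact.mk (Nat.prime_of_mem_primeFactors hp)
  obtain ⟨x, hx⟩ := exists_index_zpowers_lt hq (hprimes p hp)
    (fun r hr => Finset.mem_Icc.2 ⟨hprimes r hr, hmax r hr⟩) hpsi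
  rcases isSolvable_or_exists_normal_sylow_le (zpowers x) hx with hs | ⟨P, hPx, hP⟩
  · exact hs
  have : IsCyclic P := isCyclic_of_injective _ (inclusion_injective hPx)
  obtain ⟨K, hK⟩ := exists_right_complement'_of_coprime P.card_coprime_index
  have hcop : (Nat.card P).Coprime (Nat.card K) := hK.symm.index_eq_card ▸ P.card_coprime_index
  have : Group.IsSolvable K := isSolvable_of_psiC_le hq
    (fun r hr => hprimes r (Nat.primeFactors_mono (card_subgroup_dvd_card K) Nat.card_pos.ne' hr))
    (psiC_card_le_of_isComplement' hK hcop hpsi)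
  have : Group.IsNilpotent P := P.2.isNilpotent
  exact isSolvable_of_sup_eq_top P K hK.sup_eq_top
termination_by Nat.card G
decreasing_by
  rw [← hK.card_mul_card]
  refine lt_mul_of_one_lt_left Nat.card_pos ((one_lt_card_iff_ne_bot _).2 ?_)
  exact P.ne_bot_of_dvd_card (Nat.dvd_of_mem_primeFactors hp)

end Criterion

theorem psi_lt_of_nonsolvable_or_no_cyclic_index_p {G : Type*} [Group G] [Fintype G] (n p : ℕ)
    (hn : Fintype.card G = n) (h1 : 1 < n)
    (hp : p.Prime) (hpd : p ∣ n) (hpmax : ∀ r : ℕ, r.Prime → r ∣ n → r ≤ p)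
    (h : ¬ IsSolvable G ∨
      ∃ P : Sylow p G, ¬ ∃ H : Subgroup G, H ≤ (P : Subgroup G) ∧ IsCyclic H ∧
        (H.subgroupOf (P : Subgroup G)).index = p) :
    2 * (n.minFac - 1) * psi G < psiC n ∧ n.minFac * psi G < psiC n := by
  have := Fact.mk hp
  obtain rfl : Nat.card G = n := Nat.card_eq_fintype_card.trans hn
  have hq := (Nat.minFac_prime h1.ne').two_le
  have hmin : ∀ r ∈ (Nat.card G).primeFactors, (Nat.card G).minFac ≤ r := fun r hr =>
    Nat.minFac_le_of_dvd (Nat.prime_of_mem_primeFactors hr).two_le (Nat.dvd_of_mem_primeFactors hr)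
  have hprimes : (Nat.card G).primeFactors ⊆ Finset.Icc (Nat.card G).minFac p := fun r hr =>
    Finset.mem_Icc.2 ⟨hmin r hr, hpmax r (Nat.prime_of_mem_primeFactors hr)
      (Nat.dvd_of_mem_primeFactors hr)⟩
  have hlt : 2 * ((Nat.card G).minFac - 1) * psi G < psiC (Nat.card G) := by
    by_contra! hle
    rcases h with hG | ⟨P, hP⟩
    · exact hG (isSolvable_of_psiC_le (by omega) hmin hle)
    · obtain ⟨x, hx⟩ := exists_index_zpowers_lt (by omega)
        (Nat.minFac_le_of_dvd hp.two_le hpd) hprimes hle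
      exact hP (exists_isCyclic_index_eq_of_index_lt hpd (Subgroup.zpowers x) hx P)
  exact ⟨hlt, (Nat.mul_le_mul_right _ (by omega)).trans_lt hlt⟩
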